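/- arXiv:1907.08084 — 3 statements merged into one kernel-verified Lean document; each statement's English description precedes it below -/
import Mathlib

section
/- For every even positive integer n, the number of 3-element subsets {i,j,k} of ℤ/nℤ satisfying at least one of the congruences 2i+j+k ≡ 1, i+2j+k ≡ 1, i+j+2k ≡ 1 (mod n) equals n(n−2)/2. -/
/-!
Let `G` be a finite abelian group and `g ∈ G`. For a triple `T = {i, j, k}`, the equation
`2i + j + k = g` says that `i = g - ∑ T`. So `T` is counted iff it contains its *apex* `g - ∑ T`.
A counted triple with apex `a` is `{a, b, g - 2a - b}` for either of its two other elements `b`,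
so twice the number of counted triples is the number of pairs `(a, b)` for which `a`, `b` and
`g - 2a - b` are distinct. If `g` is not a double, then `2b = g - 2a` is impossible, so the pair
`(a, b)` qualifies iff `b ∉ {a, g - 3a}`; for the same reason `a ≠ g - 3a`, which leaves exactly
`|G| - 2` choices of `b` for every `a`.

In `ℤ/nℤ` with `n` even, `1` is not a double, as one sees modulo `2`.
-/

section AddCommGroup

open Finset

lemma sum_triple_of_card_eq_three {α M : Type*} [DecidableEq α] [AddCommMonoid M] {i j k : α}
    (h : #{i, j, k} = 3) (f : α → M) : ∑ x ∈ {i, j, k}, f x = f i + f j + f k := by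
  have hi : i ∉ ({j, k} : Finset α) := by grind
  have hjk : j ≠ k := by grind
  rw [sum_insert hi, sum_pair hjk, add_assoc]

variable {G : Type*} [AddCommGroup G] {g a b : G} {T : Finset G}

/-- The apex of a finite set `T` relative to `g`: the only possible value of `i` in a solution of
`2i + j + k = g` with `T = {i, j, k}` of size three. It need not belong to `T`. -/
def apex (g : G) (T : Finset G) : G :=
  g - ∑ x ∈ T, x

variable [DecidableEq G]

/-- The set `{a, b, c}` with `2a + b + c = g`; it has fewer than three elements when two of
`a`, `b`, `c` coincide. -/
def apexTriple (g a b : G) : Finset G :=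
  {a, b, g - 2 • a - b}

lemma apex_apexTriple (h : #(apexTriple g a b) = 3) : apex g (apexTriple g a b) = a := by
  rw [apex, apexTriple, sum_triple_of_card_eq_three h]
  abel

lemma apexTriple_apex (hT : #T = 3) (ha : apex g T ∈ T) (hb : b ∈ T.erase (apex g T)) :
    apexTriple g (apex g T) b = T := by
  obtain ⟨c, hc⟩ : ∃ c, (T.erase (apex g T)).erase b = {c} :=
    card_eq_one.mp (by rw [card_erase_of_mem hb, card_erase_of_mem ha, hT])
  have hTabc : T = {apex g T, b, c} := by rw [← hc, insert_erase hb, insert_erase ha]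
  have hsum : ∑ x ∈ T, x = apex g T + b + c := by
    rw [← sum_triple_of_card_eq_three (hTabc ▸ hT) fun x => x, ← hTabc]
  have hc_eq : g - 2 • apex g T - b = c := by grind [apex]
  rw [apexTriple, hc_eq, ← hTabc]

lemma apex_mem_iff_exists (hT : #T = 3) :
    apex g T ∈ T ↔ ∃ i j k : G, T = {i, j, k} ∧
      (2 • i + j + k = g ∨ i + 2 • j + k = g ∨ i + j + 2 • k = g) := by
  constructor
  · intro ha
    obtain ⟨b, hb⟩ : (T.erase (apex g T)).Nonempty :=
      card_pos.mp (by rw [card_erase_of_mem ha, hT]; decide)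
    exact ⟨apex g T, b, g - 2 • apex g T - b, (apexTriple_apex hT ha hb).symm, Or.inl (by abel)⟩
  · rintro ⟨i, j, k, rfl, h⟩
    rw [apex, sum_triple_of_card_eq_three hT, mem_insert, mem_insert, mem_singleton]
    rcases h with rfl | rfl | rfl
    · exact Or.inl (by abel)
    · exact Or.inr (Or.inl (by abel))
    · exact Or.inr (Or.inr (by abel))

lemma card_apexTriple_eq_three_iff (hg : ¬ Even g) :
    #(apexTriple g a b) = 3 ↔ b ∉ ({a, g - 3 • a} : Finset G) := by
  have hab : a = g - 2 • a - b ↔ b = g - 3 • a := by grind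
  have hbc : b ≠ g - 2 • a - b := fun h => hg ⟨a + b, by grind⟩
  grind [apexTriple]

variable [Fintype G]

lemma card_filter_card_apexTriple_eq_three (hg : ¬ Even g) (a : G) :
    #{b | #(apexTriple g a b) = 3} = Fintype.card G - 2 := by
  have ha : a ≠ g - 3 • a := fun h => hg ⟨2 • a, by grind⟩
  simp only [card_apexTriple_eq_three_iff hg]
  rw [filter_not, filter_mem_eq_inter, univ_inter, ← compl_eq_univ_sdiff, card_compl, card_pair ha]

lemma two_mul_card_filter_apex_mem (g : G) :
    2 * #{T : Finset G | #T = 3 ∧ apex g T ∈ T} =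
      ∑ a : G, #{b | #(apexTriple g a b) = 3} := by
  have hcard_erase : ∀ T ∈ ({T | #T = 3 ∧ apex g T ∈ T} : Finset (Finset G)),
      #(T.erase (apex g T)) = 2 := by
    intro T hT
    obtain ⟨hT, ha⟩ := (mem_filter_univ T).mp hT
    rw [card_erase_of_mem ha, hT]
  rw [mul_comm, ← sum_const_nat hcard_erase, ← card_sigma, ← card_sigma]
  refine card_bij' (fun p _ => ⟨apex g p.1, p.2⟩) (fun p _ => ⟨apexTriple g p.1 p.2, p.2⟩)
    ?_ ?_ ?_ ?_
  · rintro ⟨T, b⟩ h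
    obtain ⟨hT, ha, hb⟩ : #T = 3 ∧ apex g T ∈ T ∧ b ∈ T.erase (apex g T) := by
      simpa only [mem_sigma, mem_filter_univ, and_assoc] using h
    simpa [apexTriple_apex hT ha hb] using hT
  · rintro ⟨a, b⟩ h
    have hT : #(apexTriple g a b) = 3 := by simpa using h
    have hb : b ∈ (apexTriple g a b).erase a := by grind [apexTriple]
    have ha : a ∈ apexTriple g a b := mem_insert_self _ _
    simpa [apex_apexTriple hT, hT, ha] using hb
  · rintro ⟨T, b⟩ h
    obtain ⟨hT, ha, hb⟩ : #T = 3 ∧ apex g T ∈ T ∧ b ∈ T.erase (apex g T) := by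
      simpa only [mem_sigma, mem_filter_univ, and_assoc] using h
    simp [apexTriple_apex hT ha hb]
  · rintro ⟨a, b⟩ h
    have hT : #(apexTriple g a b) = 3 := by simpa using h
    simp [apex_apexTriple hT]

theorem stmt_5_general (hg : ¬ Even g) :
    2 * #{T : Finset G | #T = 3 ∧ ∃ i j k : G, T = {i, j, k} ∧
        (2 • i + j + k = g ∨ i + 2 • j + k = g ∨ i + j + 2 • k = g)} =
      Fintype.card G * (Fintype.card G - 2) := by
  have hapex : ∀ T : Finset G, (#T = 3 ∧ ∃ i j k : G, T = {i, j, k} ∧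
      (2 • i + j + k = g ∨ i + 2 • j + k = g ∨ i + j + 2 • k = g)) ↔ #T = 3 ∧ apex g T ∈ T :=
    fun T => and_congr_right fun hT => (apex_mem_iff_exists hT).symm
  simp only [hapex, two_mul_card_filter_apex_mem, card_filter_card_apexTriple_eq_three hg,
    sum_const, card_univ, smul_eq_mul]

end AddCommGroup

lemma not_even_one_zmod {n : ℕ} (hn : Even n) : ¬ Even (1 : ZMod n) := by
  rintro ⟨r, hr⟩
  have hr₂ := congrArg (ZMod.castHom hn.two_dvd (ZMod 2)) hr
  rw [map_one, map_add, CharTwo.add_self_eq_zero] at hr₂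
  exact one_ne_zero hr₂

/-- For every even positive integer `n`, the number of 3-element subsets `{i,j,k}` of
`ℤ/nℤ` satisfying at least one of `2i+j+k ≡ 1`, `i+2j+k ≡ 1`, `i+j+2k ≡ 1 (mod n)`
equals `n(n−2)/2`. -/
theorem stmt_5 (n : ℕ) [NeZero n] (heven : Even n) :
    2 * ((Finset.univ : Finset (Finset (ZMod n))).filter
        (fun T => T.card = 3 ∧ ∃ i j k : ZMod n, T = {i, j, k} ∧
          (2 * i + j + k = 1 ∨ i + 2 * j + k = 1 ∨ i + j + 2 * k = 1))).card
      = n * (n - 2) := by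
  simpa only [nsmul_eq_mul, Nat.cast_ofNat, ZMod.card] using
    stmt_5_general (not_even_one_zmod heven)
end

section
/- For every integer r > 4 there exists a constant C > 0 such that for every sufficiently large positive integer n there exists an r-graph on at most n vertices which is F_r(r+1,2)-free and F_r(r+2,3)-free and has at least (1/r − C/√n)·C(n,r−1) edges. -/
/-- An `r`-graph (set of edges) is `F_r(v,e)`-free if there do not exist `e` distinct
edges whose union contains at most `v` vertices. -/
def FrFree {V : Type*} [DecidableEq V] (H : Finset (Finset V)) (v e : ℕ) : Prop :=
  ¬ ∃ S ⊆ H, S.card = e ∧ (S.biUnion id).card ≤ v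

/-!
The vertices are the elements of a finite abelian group `G` with a subgroup `K ⊇ 2G`, and the edges
are the zero-sum `r`-sets none of whose four-element subsets has its sum in `K`.

Two edges cannot share `r - 1` vertices, because the sum condition determines the last one. If three
edges lay in a set `W` of `r + 2` vertices, their complements in `W` would be three disjoint pairs
with the same sum `σ`; two of these pairs form a four-element subset of the third edge, with sum
`σ + σ ∈ K`.

Of the `|G| ^ (r - 1)` ordered zero-sum `r`-tuples, `O(|G| ^ (r - 2))` have a repeated entry and,
as `r ≠ 4`, `O(|G| ^ (r - 2) * |K|)` have four entries with sum in `K`. All others list an edge.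
With `G = ℤ/a × (ℤ/2) ^ m` and `K = ℤ/a`, where `2 ^ m` is of order `√n` and `a = ⌊n / 2 ^ m⌋`, all
losses are of relative order `1 / √n`.
-/

open Finset

theorem FrFree.map {V W : Type*} [DecidableEq V] [DecidableEq W] {H : Finset (Finset V)} {v e : ℕ}
    (hH : FrFree H v e) (f : V ↪ W) : FrFree (H.map (mapEmbedding f).toEmbedding) v e := by
  rintro ⟨_, hSH, hSe, hSv⟩
  obtain ⟨S, hS, rfl⟩ := subset_map_iff.1 hSH
  refine hH ⟨S, hS, by simpa using hSe, ?_⟩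
  have hunion : (S.map (mapEmbedding f).toEmbedding).biUnion id = (S.biUnion id).map f := by
    ext w
    simp only [mem_biUnion, mem_map, RelEmbedding.coe_toEmbedding, mapEmbedding_apply, id_eq]
    grind
  rwa [hunion, card_map] at hSv

section Sums

theorem card_add_two_le_card_union_of_sum_eq {M : Type*} [AddCancelCommMonoid M] [DecidableEq M]
    {S T : Finset M} (hcard : #S = #T) (hsum : ∑ x ∈ S, x = ∑ x ∈ T, x) (hne : S ≠ T) :
    #S + 2 ≤ #(S ∪ T) := by
  have hcomm : #(S \ T) = #(T \ S) := card_sdiff_comm hcard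
  have hunion : #(T \ S) + #S = #(S ∪ T) := by rw [card_sdiff_add_card, union_comm]
  have hpos : 0 < #(S \ T) := by
    rw [card_pos, sdiff_nonempty]
    exact fun hST => hne (eq_of_subset_of_card_le hST hcard.ge)
  have hone : #(S \ T) ≠ 1 := fun h => by
    obtain ⟨x, hx⟩ := card_eq_one.1 h
    obtain ⟨y, hy⟩ := card_eq_one.1 (hcomm ▸ h)
    have hxy : x = y := by simpa [hx, hy] using sum_sdiff_eq_sum_sdiff_iff.2 hsum
    have hxS : x ∈ S \ T := by simp [hx]
    have hxT : x ∈ T \ S := by simp [hy, hxy]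
    exact (mem_sdiff.1 hxT).2 (mem_sdiff.1 hxS).1
  omega

variable {G : Type*} [AddCommGroup G] [DecidableEq G]

theorem exists_subset_card_four_sum_eq_add_self {S T U : Finset G} (hST : S ≠ T) (hSU : S ≠ U)
    (hTU : T ≠ U) (hcardT : #S = #T) (hcardU : #S = #U) (hsumT : ∑ x ∈ S, x = ∑ x ∈ T, x)
    (hsumU : ∑ x ∈ S, x = ∑ x ∈ U, x) (hle : #(S ∪ T ∪ U) ≤ #S + 2) :
    ∃ Q ⊆ U, #Q = 4 ∧ ∃ g, ∑ x ∈ Q, x = g + g := by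
  set W := S ∪ T ∪ U
  have hSW : S ⊆ W := by grind
  have hTW : T ⊆ W := by grind
  have hUW : U ⊆ W := by grind
  have cardST := card_add_two_le_card_union_of_sum_eq hcardT hsumT hST
  have cardSU := card_add_two_le_card_union_of_sum_eq hcardU hsumU hSU
  have cardTU := card_add_two_le_card_union_of_sum_eq (hcardT ▸ hcardU) (hsumT ▸ hsumU) hTU
  have unionST : S ∪ T = W := eq_of_subset_of_card_le (union_subset hSW hTW) (by omega)
  have unionSU : S ∪ U = W := eq_of_subset_of_card_le (union_subset hSW hUW) (by omega)
  have unionTU : T ∪ U = W := eq_of_subset_of_card_le (union_subset hTW hUW) (by omega)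
  have hdisj : Disjoint (W \ S) (W \ T) := by
    rw [disjoint_left]
    grind
  have hsum : ∑ x ∈ W \ T, x = ∑ x ∈ W \ S, x := by
    rw [sum_sdiff_eq_sub hTW, sum_sdiff_eq_sub hSW, hsumT]
  refine ⟨W \ S ∪ W \ T, by grind, ?_, ∑ x ∈ W \ S, x, ?_⟩
  · rw [card_union_of_disjoint hdisj, card_sdiff_of_subset hSW, card_sdiff_of_subset hTW]
    rw [unionST] at cardST
    omega
  · rw [sum_union hdisj, hsum]

end Sums

section ZeroSumHypergraph

variable {G : Type*} [AddCommGroup G] [Fintype G]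

open Classical in
/-- The `r`-graph of the construction: the zero-sum `r`-subsets of `G` that have no four-element
subset with sum in `K`. -/
noncomputable def zeroSumHypergraph (K : AddSubgroup G) (r : ℕ) : Finset (Finset G) :=
  {T ∈ powersetCard r univ | ∑ x ∈ T, x = 0 ∧ ∀ Q ⊆ T, #Q = 4 → ∑ x ∈ Q, x ∉ K}

variable {K : AddSubgroup G} {r : ℕ}

theorem mem_zeroSumHypergraph {T : Finset G} :
    T ∈ zeroSumHypergraph K r ↔
      #T = r ∧ ∑ x ∈ T, x = 0 ∧ ∀ Q ⊆ T, #Q = 4 → ∑ x ∈ Q, x ∉ K := by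
  simp [zeroSumHypergraph]

variable [DecidableEq G]

theorem frFree_zeroSumHypergraph_two (K : AddSubgroup G) (r : ℕ) :
    FrFree (zeroSumHypergraph K r) (r + 1) 2 := by
  rintro ⟨F, hF, hcard, hle⟩
  obtain ⟨S, T, hST, rfl⟩ := card_eq_two.1 hcard
  obtain ⟨hSr, hS, -⟩ := mem_zeroSumHypergraph.1 (hF (by simp : S ∈ _))
  obtain ⟨hTr, hT, -⟩ := mem_zeroSumHypergraph.1 (hF (by simp : T ∈ _))
  have := card_add_two_le_card_union_of_sum_eq (hSr.trans hTr.symm) (hS.trans hT.symm) hST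
  simp only [biUnion_insert, singleton_biUnion, id] at hle
  omega

theorem frFree_zeroSumHypergraph_three (hK : ∀ g : G, g + g ∈ K) (r : ℕ) :
    FrFree (zeroSumHypergraph K r) (r + 2) 3 := by
  rintro ⟨F, hF, hcard, hle⟩
  obtain ⟨S, T, U, hST, hSU, hTU, rfl⟩ := card_eq_three.1 hcard
  obtain ⟨rfl, hS, -⟩ := mem_zeroSumHypergraph.1 (hF (by simp : S ∈ _))
  obtain ⟨hTr, hT, -⟩ := mem_zeroSumHypergraph.1 (hF (by simp : T ∈ _))
  obtain ⟨hUr, hU, hUK⟩ := mem_zeroSumHypergraph.1 (hF (by simp : U ∈ _))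
  simp only [biUnion_insert, singleton_biUnion, id, ← union_assoc] at hle
  obtain ⟨Q, hQU, hQ, g, hg⟩ := exists_subset_card_four_sum_eq_add_self hST hSU hTU hTr.symm
    hUr.symm (hS.trans hT.symm) (hS.trans hU.symm) hle
  exact hUK Q hQU hQ (hg ▸ hK g)

end ZeroSumHypergraph

section Tuples

theorem card_injective_image_mem_le {ι V : Type*} [Fintype ι] [DecidableEq ι] [Fintype V]
    [DecidableEq V] {H : Finset (Finset V)} (hH : ∀ T ∈ H, #T = Fintype.card ι) :
    #{x : ι → V | x.Injective ∧ univ.image x ∈ H} ≤ (Fintype.card ι).factorial * #H := by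
  refine card_le_mul_card_image_of_maps_to (f := fun x => univ.image x)
    (fun x hx => (mem_filter.1 hx).2.2) _ fun T hT => ?_
  let toTuple : (ι ↪ T) ↪ (ι → V) :=
    ⟨fun f i => f i, fun f g h => by ext i; exact congrFun h i⟩
  calc #{x ∈ {x : ι → V | x.Injective ∧ univ.image x ∈ H} | univ.image x = T}
      ≤ #((univ : Finset (ι ↪ T)).map toTuple) := card_le_card fun x hx => ?_
    _ = (Fintype.card ι).factorial := by
        rw [card_map, card_univ, Fintype.card_embedding_eq, Fintype.card_coe, hH T hT,
          Nat.descFactorial_self]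
  simp only [mem_filter, mem_univ, true_and] at hx
  obtain ⟨⟨hinj, -⟩, rfl⟩ := hx
  exact mem_map.2 ⟨⟨fun i => ⟨x i, mem_image_of_mem x (mem_univ i)⟩,
    fun i j h => hinj (congrArg Subtype.val h)⟩, mem_univ _, rfl⟩

variable {ι G : Type*} [Fintype ι] [DecidableEq ι] [AddCommGroup G] [Fintype G] [DecidableEq G]

variable (ι G) in
/-- The tuples of elements of `G` indexed by `ι`, repetitions allowed, whose entries sum to zero. -/
def zeroSumTuples : Finset (ι → G) := {x | ∑ i, x i = 0}

theorem mem_zeroSumTuples {x : ι → G} : x ∈ zeroSumTuples ι G ↔ ∑ i, x i = 0 := by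
  simp [zeroSumTuples]

variable (G) in
theorem card_zeroSumTuples_fin_succ (d : ℕ) :
    #(zeroSumTuples (Fin (d + 1)) G) = Fintype.card G ^ d := by
  trans #(univ : Finset (Fin d → G))
  · refine card_nbij' Fin.tail (fun y => Fin.cons (-∑ i, y i) y) (by simp) ?_ ?_
      fun y _ => by simp
    · intro y _
      simp [mem_zeroSumTuples, Fin.sum_univ_succ]
    · intro x hx
      rw [mem_coe, mem_zeroSumTuples, Fin.sum_univ_succ] at hx
      simp [Fin.tail, ← eq_neg_of_add_eq_zero_left hx]
  · simp

theorem eq_of_mem_zeroSumTuples_of_eq_off {x y : ι → G} (hx : x ∈ zeroSumTuples ι G)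
    (hy : y ∈ zeroSumTuples ι G) (l : ι) (h : ∀ k ≠ l, x k = y k) : x = y := by
  rw [mem_zeroSumTuples, ← add_sum_erase _ _ (mem_univ l)] at hx hy
  have herase : ∑ k ∈ univ.erase l, x k = ∑ k ∈ univ.erase l, y k :=
    sum_congr rfl fun k hk => h k (ne_of_mem_erase hk)
  have hl : x l = y l := add_right_cancel (hx.trans (herase ▸ hy.symm))
  funext k
  obtain rfl | hk := eq_or_ne k l
  exacts [hl, h k hk]

theorem card_zeroSumTuples_filter_mem_le {κ : Type*} [DecidableEq κ] {i l : ι} (hil : i ≠ l)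
    {f : (ι → G) → κ} (t : Finset κ)
    (hf : ∀ x y, (∀ k, k ≠ i → k ≠ l → x k = y k) → f x = f y → x i = y i) :
    #{x ∈ zeroSumTuples ι G | f x ∈ t} ≤ Fintype.card G ^ (Fintype.card ι - 2) * #t := by
  have hcard : Fintype.card {k // k ∉ ({i, l} : Finset ι)} = Fintype.card ι - 2 := by
    simp [Fintype.card_subtype_compl, -mem_insert, -mem_singleton, card_pair hil]
  calc #{x ∈ zeroSumTuples ι G | f x ∈ t}
      ≤ #((univ : Finset ({k // k ∉ ({i, l} : Finset ι)} → G)) ×ˢ t) := ?_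
    _ = Fintype.card G ^ (Fintype.card ι - 2) * #t := by
        rw [card_product, card_univ, Fintype.card_fun, hcard]
  refine card_le_card_of_injOn (fun x => (fun k => x k, f x)) (fun x hx => ?_) ?_
  · simpa using (mem_filter.1 hx).2
  · intro x hx y hy hxy
    obtain ⟨hoff, hfxy⟩ := Prod.mk.inj hxy
    have hoff' : ∀ k, k ≠ i → k ≠ l → x k = y k := fun k hki hkl =>
      congrFun hoff ⟨k, by simp [hki, hkl]⟩
    refine eq_of_mem_zeroSumTuples_of_eq_off (mem_filter.1 hx).1 (mem_filter.1 hy).1 l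
      fun k hkl => ?_
    by_cases hki : k = i
    · exact hki ▸ hf x y hoff' hfxy
    · exact hoff' k hki hkl

theorem card_zeroSumTuples_filter_eq_le (hι : 3 ≤ Fintype.card ι) {i j : ι} (hij : i ≠ j) :
    #{x ∈ zeroSumTuples ι G | x i = x j} ≤ Fintype.card G ^ (Fintype.card ι - 2) := by
  obtain ⟨l, -, hl⟩ := exists_mem_notMem_of_card_lt_card (s := {i, j}) (t := univ)
    (card_le_two.trans_lt (by rwa [card_univ]))
  have h := card_zeroSumTuples_filter_mem_le (G := G) (i := i) (l := l) (by grind)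
    (f := fun x => x i - x j) {0} fun x y hoff hxy => by
      simpa [hoff j hij.symm (by grind)] using hxy
  simpa [sub_eq_zero] using h

open Classical in
theorem card_zeroSumTuples_filter_sum_mem_le (K : AddSubgroup G) {Q : Finset ι}
    (hQ : Q.Nonempty) (hQ' : Q ≠ univ) :
    #{x ∈ zeroSumTuples ι G | ∑ k ∈ Q, x k ∈ K} ≤
      Fintype.card G ^ (Fintype.card ι - 2) * Nat.card K := by
  obtain ⟨i, hi⟩ := hQ
  obtain ⟨l, hl⟩ : ∃ l, l ∉ Q := by simpa [eq_univ_iff_forall] using hQ'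
  have h := card_zeroSumTuples_filter_mem_le (G := G) (i := i) (l := l) (by grind)
    (f := fun x => ∑ k ∈ Q, x k) {g | g ∈ K} fun x y hoff hxy => by
      have herase : ∑ k ∈ Q.erase i, x k = ∑ k ∈ Q.erase i, y k :=
        sum_congr rfl fun k hk => hoff k (ne_of_mem_erase hk) (by grind)
      simpa [← add_sum_erase _ _ hi, herase] using hxy
  simpa [Nat.card_eq_fintype_card, Fintype.card_subtype] using h

open Classical in
theorem card_zeroSumTuples_filter_not_injective_le (hι : 3 ≤ Fintype.card ι) :
    #{x ∈ zeroSumTuples ι G | ¬ x.Injective} ≤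
      Fintype.card ι ^ 2 * Fintype.card G ^ (Fintype.card ι - 2) := by
  calc #{x ∈ zeroSumTuples ι G | ¬ x.Injective}
      ≤ #((univ : Finset ι).offDiag.biUnion fun p =>
          {x ∈ zeroSumTuples ι G | x p.1 = x p.2}) := by
        refine card_le_card fun x hx => ?_
        obtain ⟨hx, hinj⟩ := mem_filter.1 hx
        obtain ⟨i, j, hij, hne⟩ := Function.not_injective_iff.1 hinj
        exact mem_biUnion.2 ⟨(i, j), by simpa using hne, mem_filter.2 ⟨hx, hij⟩⟩
    _ ≤ #(univ : Finset ι).offDiag * Fintype.card G ^ (Fintype.card ι - 2) :=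
        card_biUnion_le_card_mul _ _ _ fun p hp =>
          card_zeroSumTuples_filter_eq_le hι (mem_offDiag.1 hp).2.2
    _ ≤ Fintype.card ι ^ 2 * Fintype.card G ^ (Fintype.card ι - 2) := by
        gcongr
        rw [offDiag_card, card_univ, sq]
        exact Nat.sub_le _ _

open Classical in
theorem card_zeroSumTuples_filter_exists_sum_mem_le (K : AddSubgroup G) {q : ℕ} (hq : 0 < q)
    (hqι : q ≠ Fintype.card ι) :
    #{x ∈ zeroSumTuples ι G | ∃ Q : Finset ι, #Q = q ∧ ∑ k ∈ Q, x k ∈ K} ≤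
      (Fintype.card ι).choose q * (Fintype.card G ^ (Fintype.card ι - 2) * Nat.card K) := by
  calc #{x ∈ zeroSumTuples ι G | ∃ Q : Finset ι, #Q = q ∧ ∑ k ∈ Q, x k ∈ K}
      ≤ #((powersetCard q (univ : Finset ι)).biUnion fun Q =>
          {x ∈ zeroSumTuples ι G | ∑ k ∈ Q, x k ∈ K}) := by
        refine card_le_card fun x hx => ?_
        obtain ⟨hx, Q, hQ, hQK⟩ := mem_filter.1 hx
        exact mem_biUnion.2 ⟨Q, mem_powersetCard_univ.2 hQ, mem_filter.2 ⟨hx, hQK⟩⟩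
    _ ≤ #(powersetCard q (univ : Finset ι)) *
          (Fintype.card G ^ (Fintype.card ι - 2) * Nat.card K) := by
        refine card_biUnion_le_card_mul _ _ _ fun Q hQ => ?_
        obtain rfl := mem_powersetCard_univ.1 hQ
        exact card_zeroSumTuples_filter_sum_mem_le K (card_pos.1 hq)
          (by rintro rfl; exact hqι card_univ)
    _ = _ := by rw [card_powersetCard, card_univ]

end Tuples

section Counting

variable {G : Type*} [AddCommGroup G] [Fintype G] {r : ℕ} {K : AddSubgroup G}

theorem image_mem_zeroSumHypergraph [DecidableEq G] {x : Fin r → G}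
    (hx : x ∈ zeroSumTuples (Fin r) G) (hinj : x.Injective)
    (hK : ∀ Q : Finset (Fin r), #Q = 4 → ∑ k ∈ Q, x k ∉ K) :
    univ.image x ∈ zeroSumHypergraph K r := by
  refine mem_zeroSumHypergraph.2 ⟨by simp [card_image_of_injective _ hinj], ?_, ?_⟩
  · rwa [sum_image hinj.injOn, ← mem_zeroSumTuples]
  · intro P hP hPcard
    obtain ⟨Q, -, rfl⟩ := subset_image_iff.1 hP
    rw [card_image_of_injective _ hinj] at hPcard
    rw [sum_image hinj.injOn]
    exact hK Q hPcard

theorem card_pow_le_card_zeroSumHypergraph (h3 : 3 ≤ r) (h4 : r ≠ 4) :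
    Fintype.card G ^ (r - 1) ≤ r.factorial * #(zeroSumHypergraph K r) +
      r ^ 2 * Fintype.card G ^ (r - 2) +
      r.choose 4 * (Fintype.card G ^ (r - 2) * Nat.card K) := by
  classical
  let good : Finset (Fin r → G) := {x | x.Injective ∧ univ.image x ∈ zeroSumHypergraph K r}
  let repeated := {x ∈ zeroSumTuples (Fin r) G | ¬ x.Injective}
  let fourInK := {x ∈ zeroSumTuples (Fin r) G | ∃ Q : Finset (Fin r), #Q = 4 ∧ ∑ k ∈ Q, x k ∈ K}
  have hcover : zeroSumTuples (Fin r) G ⊆ good ∪ repeated ∪ fourInK := by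
    intro x hx
    by_contra! hnot
    simp only [good, repeated, fourInK, mem_union, mem_filter, mem_univ, true_and, hx, not_or,
      not_exists, not_and, not_not] at hnot
    obtain ⟨⟨hgood, hinj⟩, hfour⟩ := hnot
    exact hgood hinj (image_mem_zeroSumHypergraph hx hinj hfour)
  have hgood : #good ≤ r.factorial * #(zeroSumHypergraph K r) := by
    simpa using card_injective_image_mem_le (ι := Fin r) (H := zeroSumHypergraph K r)
      fun T hT => by simpa using (mem_zeroSumHypergraph.1 hT).1
  have hrepeated : #repeated ≤ r ^ 2 * Fintype.card G ^ (r - 2) := by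
    simpa using card_zeroSumTuples_filter_not_injective_le (ι := Fin r) (G := G) (by simpa using h3)
  have hfour : #fourInK ≤ r.choose 4 * (Fintype.card G ^ (r - 2) * Nat.card K) := by
    simpa using card_zeroSumTuples_filter_exists_sum_mem_le (ι := Fin r) K four_pos
      (by simpa using h4.symm)
  calc Fintype.card G ^ (r - 1) = #(zeroSumTuples (Fin r) G) := by
        obtain ⟨d, rfl⟩ := Nat.exists_eq_add_of_le' (show 1 ≤ r by omega)
        exact (card_zeroSumTuples_fin_succ G d).symm
    _ ≤ #good + #repeated + #fourInK := by
        grw [hcover, card_union_le, card_union_le]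
    _ ≤ _ := by gcongr

end Counting

section Parameters

theorem exists_addSubgroup_add_self_mem {n : ℕ} (hn : 0 < n) :
    ∃ (G : Type) (_ : AddCommGroup G) (_ : Fintype G) (K : AddSubgroup G),
      (∀ g : G, g + g ∈ K) ∧ Fintype.card G ≤ n ∧ (n : ℝ) - √n ≤ Fintype.card G ∧
      (Nat.card K : ℝ) ≤ 2 * √n := by
  have hsqrt : 1 ≤ √(n : ℝ) := Real.one_le_sqrt.2 (by exact_mod_cast hn)
  have hsq : √(n : ℝ) * √n = n := Real.mul_self_sqrt n.cast_nonneg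
  obtain ⟨m, hm, hm'⟩ := exists_nat_pow_near hsqrt one_lt_two
  have hmn : 2 ^ m ≤ n := by
    have : (2 : ℝ) ^ m ≤ n := by nlinarith
    exact_mod_cast this
  set a := n / 2 ^ m with ha
  have : NeZero a := ⟨(Nat.div_pos hmn (by positivity)).ne'⟩
  have hle : a * 2 ^ m ≤ n := Nat.div_mul_le_self n _
  have hlt : n < a * 2 ^ m + 2 ^ m := Nat.lt_div_mul_add (by positivity)
  have hcard : Fintype.card (ZMod a × (Fin m → ZMod 2)) = a * 2 ^ m := by simp [ZMod.card]
  refine ⟨ZMod a × (Fin m → ZMod 2), inferInstance, inferInstance, AddSubgroup.prod ⊤ ⊥,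
    fun g => ?_, hcard ▸ hle, ?_, ?_⟩
  · have : g.2 + g.2 = 0 := funext fun i => CharTwo.add_self_eq_zero (g.2 i)
    simpa [AddSubgroup.mem_prod] using this
  · have : (n : ℝ) < a * 2 ^ m + 2 ^ m := by exact_mod_cast hlt
    rw [hcard]
    push_cast
    linarith
  · have hcardK : Nat.card (AddSubgroup.prod (⊤ : AddSubgroup (ZMod a))
        (⊥ : AddSubgroup (Fin m → ZMod 2))) = a := by
      simp [Nat.card_congr (AddSubgroup.prodEquiv _ _).toEquiv]
    have : (a : ℝ) * 2 ^ m ≤ n := by exact_mod_cast hle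
    rw [hcardK]
    rw [pow_succ] at hm'
    by_contra! hlt
    nlinarith

theorem one_sub_mul_mul_pow_le_pow {x y ε : ℝ} (hε : ε ≤ 1) (hx : 0 ≤ x)
    (hxy : (1 - ε) * x ≤ y) (d : ℕ) : (1 - d * ε) * x ^ d ≤ y ^ d := by
  calc (1 - d * ε) * x ^ d = (1 + d * -ε) * x ^ d := by ring
    _ ≤ (1 + -ε) ^ d * x ^ d := by
        gcongr
        exact one_add_mul_le_pow (by linarith) d
    _ = ((1 - ε) * x) ^ d := by rw [mul_pow, sub_eq_add_neg]
    _ ≤ y ^ d := pow_le_pow_left₀ (mul_nonneg (by linarith) hx) hxy d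

theorem one_sub_mul_mul_pow_le_of_pow_le {x y k ε p c m : ℝ} {d : ℕ} (hε : ε ≤ 1)
    (hεx : 1 ≤ ε * x) (hy : 0 ≤ y) (hyx : y ≤ x) (hxy : (1 - ε) * x ≤ y) (hp : 0 ≤ p) (hc : 0 ≤ c)
    (hk : k ≤ 2 * (ε * x)) (h : y ^ (d + 1) ≤ m + p * y ^ d + c * (y ^ d * k)) :
    (1 - (d + 1 + p + 2 * c) * ε) * x ^ (d + 1) ≤ m := by
  have hx : 0 ≤ x := hy.trans hyx
  have hbernoulli := one_sub_mul_mul_pow_le_pow hε hx hxy (d + 1)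
  have hpow : y ^ d ≤ x ^ d := by gcongr
  have hpTerm : p * y ^ d ≤ p * (x ^ d * (ε * x)) := by
    gcongr
    exact hpow.trans (le_mul_of_one_le_right (by positivity) hεx)
  have hcTerm : c * (y ^ d * k) ≤ c * (x ^ d * (2 * (ε * x))) :=
    calc c * (y ^ d * k) ≤ c * (y ^ d * (2 * (ε * x))) := by gcongr
      _ ≤ c * (x ^ d * (2 * (ε * x))) := by gcongr
  push_cast at hbernoulli
  linear_combination hbernoulli + h + hpTerm + hcTerm

theorem mul_choose_le_of_mul_pow_le {δ h : ℝ} {n d : ℕ} (hh : 0 ≤ h)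
    (hpow : (1 - δ) * (n : ℝ) ^ d ≤ (d + 1).factorial * h) :
    (1 - δ) / (d + 1) * n.choose d ≤ h := by
  rcases le_total (1 - δ) 0 with hneg | hnonneg
  · exact (mul_nonpos_of_nonpos_of_nonneg (div_nonpos_of_nonpos_of_nonneg hneg (by positivity))
      (by positivity)).trans hh
  · calc (1 - δ) / (d + 1) * n.choose d ≤ (1 - δ) / (d + 1) * ((n : ℝ) ^ d / d.factorial) := by
          gcongr
          exact Nat.choose_le_pow_div d n
      _ = (1 - δ) * (n : ℝ) ^ d / (d + 1).factorial := by
          rw [Nat.factorial_succ]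
          push_cast
          field_simp
      _ ≤ h := by
          rw [div_le_iff₀' (by positivity)]
          exact hpow

end Parameters

theorem mul_choose_le_card_zeroSumHypergraph {G : Type*} [AddCommGroup G] [Fintype G]
    {K : AddSubgroup G} {r n : ℕ} (h3 : 3 ≤ r) (h4 : r ≠ 4) (hn : 0 < n)
    (hGn : Fintype.card G ≤ n) (hnG : (n : ℝ) - √n ≤ Fintype.card G)
    (hKn : (Nat.card K : ℝ) ≤ 2 * √n) :
    ((1 / r : ℝ) - (r - 1 + r ^ 2 + 2 * r.choose 4) / r / √n) * n.choose (r - 1) ≤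
      #(zeroSumHypergraph K r) := by
  classical
  have hcount := card_pow_le_card_zeroSumHypergraph (K := K) h3 h4
  obtain ⟨d, rfl⟩ := Nat.exists_eq_add_of_le' (show 2 ≤ r by omega)
  have hsqrt : 1 ≤ √(n : ℝ) := Real.one_le_sqrt.2 (by exact_mod_cast hn)
  have hεn : (√(n : ℝ))⁻¹ * n = √n := by
    rw [inv_mul_eq_div, Real.div_sqrt]
  have hpow := one_sub_mul_mul_pow_le_of_pow_le (x := n) (y := Fintype.card G) (k := Nat.card K)
    (ε := (√(n : ℝ))⁻¹) (p := ((d + 2 : ℕ) : ℝ) ^ 2) (c := (d + 2).choose 4)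
    (m := (d + 2).factorial * #(zeroSumHypergraph K (d + 2))) (d := d)
    (inv_le_one_of_one_le₀ hsqrt) (by rwa [hεn]) (by positivity) (by exact_mod_cast hGn)
    (by rwa [sub_mul, one_mul, hεn]) (by positivity) (by positivity) (by rwa [hεn])
    (by exact_mod_cast hcount)
  refine le_of_eq_of_le ?_ (mul_choose_le_of_mul_pow_le (Nat.cast_nonneg _) hpow)
  rw [show d + 2 - 1 = d + 1 from rfl]
  push_cast
  field_simp
  ring

theorem stmt_15_general (r : ℕ) (h3 : 3 ≤ r) (h4 : r ≠ 4) :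
    ∃ C : ℝ, 0 < C ∧ ∀ n : ℕ, 0 < n →
      ∃ k ≤ n, ∃ H : Finset (Finset (Fin k)),
        (∀ A ∈ H, A.card = r) ∧
        FrFree H (r + 1) 2 ∧ FrFree H (r + 2) 3 ∧
        ((1 / r : ℝ) - C / Real.sqrt n) * (n.choose (r - 1)) ≤ H.card := by
  refine ⟨(r - 1 + r ^ 2 + 2 * r.choose 4) / r, ?_, fun n hn => ?_⟩
  · have : (3 : ℝ) ≤ r := by exact_mod_cast h3
    have : (0 : ℝ) < r - 1 := by linarith
    positivity
  classical
  obtain ⟨G, _, _, K, hK, hGn, hnG, hKn⟩ := exists_addSubgroup_add_self_mem hn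
  let f : G ↪ Fin (Fintype.card G) := (Fintype.equivFin G).toEmbedding
  refine ⟨Fintype.card G, hGn, (zeroSumHypergraph K r).map (mapEmbedding f).toEmbedding, ?_,
    (frFree_zeroSumHypergraph_two K r).map f, (frFree_zeroSumHypergraph_three hK r).map f, ?_⟩
  · intro A hA
    obtain ⟨T, hT, rfl⟩ := mem_map.1 hA
    simpa using (mem_zeroSumHypergraph.1 hT).1
  · rw [card_map]
    exact mul_choose_le_card_zeroSumHypergraph h3 h4 hn hGn hnG hKn

/-- For every integer `r > 4` there exists a constant `C > 0` such that for every
sufficiently large positive integer `n` there exists an `r`-graph on at most `n`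
vertices which is `F_r(r+1,2)`-free and `F_r(r+2,3)`-free and has at least
`(1/r − C/√n)·C(n,r−1)` edges. -/
theorem stmt_15 (r : ℕ) (hr : 4 < r) :
    ∃ C : ℝ, 0 < C ∧ ∃ N : ℕ, ∀ n : ℕ, N ≤ n →
      ∃ k ≤ n, ∃ H : Finset (Finset (Fin k)),
        (∀ A ∈ H, A.card = r) ∧
        FrFree H (r + 1) 2 ∧ FrFree H (r + 2) 3 ∧
        ((1 / r : ℝ) - C / Real.sqrt n) * (n.choose (r - 1)) ≤ H.card := by
  obtain ⟨C, hC, h⟩ := stmt_15_general r (by omega) (by omega)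
  exact ⟨C, hC, 1, h⟩
end

section
/- For every integer r ≥ 3 and every real ε > 0 there exists N such that for every integer n ≥ N there exists an F_r(r+2,3)-free r-graph on n vertices with at least (1/r − ε)·C(n,r−1) edges; that is, f_r(n, r+2, 3) ≥ (1/r − o(1))·C(n,r−1) as n → ∞. -/
/-!
Identify the `n` vertices with an abelian group of order `n`, and take as edges the weak Sidon
`r`-sets with a prescribed sum `s`.

Two distinct edges cannot share `r - 1` vertices, since the sum determines the last one, so they
span at least `r + 2` vertices. If three edges `A`, `B`, `C` lie in a set `U` of `r + 2` vertices,
any two of them therefore cover `U`. Hence `U \ B` and `U \ C` are distinct pairs inside `A` with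
the same sum `∑ U - s`, contradicting that `A` is weakly Sidon.

An `r`-set that is not weakly Sidon contains some `d = a + b - c` with `a`, `b`, `c` among its other
elements, so there are at most `(r - 1)³ C(n, r - 1)` such sets. Averaging over `s`, some `s` gives
at least `(C(n, r) - (r - 1)³ C(n, r - 1)) / n = (1/r - O(1/n)) C(n, r - 1)` edges.
-/

open Finset

section Hypergraph

variable {V : Type*} [DecidableEq V] {H : Finset (Finset V)} {v : ℕ}

lemma frFree_two_iff :
    FrFree H v 2 ↔ (H : Set (Finset V)).Pairwise fun A B ↦ v < #(A ∪ B) := by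
  constructor
  · intro h A hA B hB hAB
    by_contra! hv
    exact h ⟨{A, B}, by simp [insert_subset_iff, mem_coe.1 hA, mem_coe.1 hB], card_pair hAB,
      by simpa using hv⟩
  · rintro h ⟨S, hSH, hS, hv⟩
    obtain ⟨A, B, hAB, rfl⟩ := card_eq_two.1 hS
    have hlt : v < #(A ∪ B) := h (hSH (by simp)) (hSH (by simp)) hAB
    simp only [biUnion_insert, singleton_biUnion, id] at hv
    lia

end Hypergraph

/-- A finite set is *weakly Sidon* if distinct pairs of distinct elements have distinct sums. A pair
is encoded as a `2`-element subset, so sums `a + a` are not considered. -/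
def IsWeakSidon {M : Type*} [AddCommMonoid M] (A : Finset M) : Prop :=
  Set.InjOn (fun P : Finset M ↦ ∑ x ∈ P, x) (A.powersetCard 2)

section CommonSum

variable {M : Type*} [AddCancelCommMonoid M] [DecidableEq M]

lemma eq_of_sum_eq_of_card_sdiff_le_one {A B : Finset M} (hcard : #A = #B)
    (hsum : ∑ x ∈ A, x = ∑ x ∈ B, x) (hAB : #(A \ B) ≤ 1) : A = B := by
  have hcard_sdiff : #(A \ B) = #(B \ A) := card_sdiff_comm hcard
  have hsum_sdiff : ∑ x ∈ A \ B, x = ∑ x ∈ B \ A, x := sum_sdiff_eq_sum_sdiff_iff.2 hsum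
  obtain h0 | h1 := Nat.le_one_iff_eq_zero_or_eq_one.1 hAB
  · exact eq_of_subset_of_card_le (sdiff_eq_empty_iff_subset.1 (card_eq_zero.1 h0)) hcard.ge
  · obtain ⟨a, ha⟩ := card_eq_one.1 h1
    obtain ⟨b, hb⟩ := card_eq_one.1 (hcard_sdiff.symm.trans h1)
    have hab : a = b := by simpa only [ha, hb, sum_singleton] using hsum_sdiff
    have hdisj : Disjoint (A \ B) (B \ A) := disjoint_sdiff_sdiff
    simp [ha, hb, hab] at hdisj

variable {H : Finset (Finset M)} {r : ℕ} {s : M}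

lemma frFree_two_of_sum_eq (hcard : ∀ A ∈ H, #A = r) (hsum : ∀ A ∈ H, ∑ x ∈ A, x = s) :
    FrFree H (r + 1) 2 := by
  refine frFree_two_iff.2 fun A hA B hB hAB ↦ ?_
  by_contra! hle
  have hA_card := hcard A hA
  have hB_card := hcard B hB
  have hunion : #(A \ B) + #B = #(A ∪ B) := card_sdiff_add_card A B
  exact hAB (eq_of_sum_eq_of_card_sdiff_le_one (hA_card.trans hB_card.symm)
    ((hsum A hA).trans (hsum B hB).symm) (by lia))

lemma frFree_three_of_isWeakSidon_of_sum_eq (hcard : ∀ A ∈ H, #A = r)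
    (hsum : ∀ A ∈ H, ∑ x ∈ A, x = s) (hSidon : ∀ A ∈ H, IsWeakSidon A) :
    FrFree H (r + 2) 3 := by
  have hspan : ∀ A ∈ H, ∀ B ∈ H, A ≠ B → r + 2 ≤ #(A ∪ B) := fun A hA B hB hAB ↦
    frFree_two_iff.1 (frFree_two_of_sum_eq hcard hsum) hA hB hAB
  rintro ⟨S, hSH, hS, hU⟩
  obtain ⟨A, B, C, hAB, hAC, hBC, hABC⟩ := card_eq_three.1 hS
  have hA : A ∈ S := by simp [hABC]
  have hB : B ∈ S := by simp [hABC]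
  have hC : C ∈ S := by simp [hABC]
  set U := S.biUnion id
  have hsub : ∀ E ∈ S, E ⊆ U := fun E hE ↦ subset_biUnion_of_mem id hE
  have hcover : ∀ E ∈ S, ∀ F ∈ S, E ≠ F → E ∪ F = U := fun E hE F hF hEF ↦
    eq_of_subset_of_card_le (union_subset (hsub E hE) (hsub F hF))
      (hU.trans (hspan E (hSH hE) F (hSH hF) hEF))
  have hU_card : #U = r + 2 :=
    hU.antisymm (hcover A hA B hB hAB ▸ hspan A (hSH hA) B (hSH hB) hAB)
  have hcompl_mem : ∀ E ∈ S, E ≠ A → U \ E ∈ A.powersetCard 2 := by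
    refine fun E hE hEA ↦ mem_powersetCard.2 ⟨sdiff_le_iff.2 (hcover E hE A hA hEA).ge, ?_⟩
    rw [card_sdiff_of_subset (hsub E hE), hU_card, hcard E (hSH hE), Nat.add_sub_cancel_left]
  have hcompl_sum : ∀ E ∈ S, ∑ x ∈ U \ E, x + s = ∑ x ∈ U, x := fun E hE ↦ by
    rw [← hsum E (hSH hE), sum_sdiff (hsub E hE)]
  have hcompl_eq : U \ B = U \ C := hSidon A (hSH hA) (hcompl_mem B hB hAB.symm)
    (hcompl_mem C hC hAC.symm)
    (add_right_cancel ((hcompl_sum B hB).trans (hcompl_sum C hC).symm))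
  exact hBC ((sdiff_right_inj (hsub B hB) (hsub C hC)).1 hcompl_eq)

end CommonSum

section Counting

lemma exists_card_le_card_mul_card_fiber {α β : Type*} [Fintype β] [DecidableEq β] [Nonempty β]
    (S : Finset α) (f : α → β) : ∃ y, #S ≤ Fintype.card β * #{x ∈ S | f x = y} := by
  obtain ⟨y, hy⟩ := Finite.exists_max fun y ↦ #{x ∈ S | f x = y}
  refine ⟨y, ?_⟩
  rw [mul_comm]
  exact card_le_mul_card_image_of_maps_to (t := univ) (fun x _ ↦ mem_univ (f x)) _ fun z _ ↦ hy z

lemma choose_mul_le_succ_mul_choose_succ_add (n k : ℕ) :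
    n.choose k * n ≤ (k + 1) * n.choose (k + 1) + k * n.choose k :=
  calc n.choose k * n ≤ n.choose k * ((n - k) + k) := by gcongr; lia
    _ = (k + 1) * n.choose (k + 1) + k * n.choose k := by
      rw [mul_add, ← Nat.choose_succ_right_eq]; ring

variable {G : Type*} [AddCommGroup G]

lemma exists_mem_eq_add_sub_of_not_isWeakSidon [DecidableEq G] {A : Finset G}
    (hA : ¬ IsWeakSidon A) :
    ∃ d ∈ A, ∃ a ∈ A.erase d, ∃ b ∈ A.erase d, ∃ c ∈ A.erase d, d = a + b - c := by
  simp only [IsWeakSidon, Set.InjOn, mem_coe, mem_powersetCard] at hA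
  push Not at hA
  obtain ⟨P, ⟨hPA, hP⟩, Q, ⟨hQA, hQ⟩, hsum, hPQ⟩ := hA
  obtain ⟨d, hdQ, hdP⟩ : ∃ d ∈ Q, d ∉ P :=
    not_subset.1 fun h ↦ hPQ (eq_of_subset_of_card_le h (hP.trans hQ.symm).le).symm
  obtain ⟨a, b, hab, rfl⟩ := card_eq_two.1 hP
  obtain ⟨c, hc⟩ := card_eq_one.1 ((card_erase_of_mem hdQ).trans (by rw [hQ]))
  have hc_mem : c ∈ Q.erase d := hc ▸ mem_singleton_self c
  have hsum' : d + c = a + b := by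
    rwa [sum_pair hab, ← add_sum_erase Q _ hdQ, hc, sum_singleton, eq_comm] at hsum
  have hmem : ∀ x ∈ ({a, b} : Finset G), x ∈ A.erase d := fun x hx ↦
    mem_erase.2 ⟨fun h ↦ hdP (h ▸ hx), hPA hx⟩
  exact ⟨d, hQA hdQ, a, hmem a (by simp), b, hmem b (by simp), c, erase_subset_erase d hQA hc_mem,
    eq_sub_of_add_eq hsum'⟩

variable [Fintype G]

lemma card_le_of_forall_not_isWeakSidon {H : Finset (Finset G)} {k : ℕ}
    (hcard : ∀ A ∈ H, #A = k + 1) (hH : ∀ A ∈ H, ¬ IsWeakSidon A) :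
    #H ≤ (Fintype.card G).choose k * k ^ 3 := by
  classical
  let extensions (B : Finset G) : Finset (Finset G) :=
    (B ×ˢ B ×ˢ B).image fun (a, b, c) ↦ insert (a + b - c) B
  have hsub : H ⊆ (univ.powersetCard k).biUnion extensions := by
    intro A hA
    obtain ⟨d, hd, a, ha, b, hb, c, hc, habc⟩ := exists_mem_eq_add_sub_of_not_isWeakSidon (hH A hA)
    refine mem_biUnion.2 ⟨A.erase d, ?_, mem_image.2 ⟨(a, b, c), ?_, ?_⟩⟩
    · simp [card_erase_of_mem hd, hcard A hA]
    · exact mk_mem_product ha (mk_mem_product hb hc)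
    · simp only [← habc, insert_erase hd]
  have hextensions : ∀ B ∈ univ.powersetCard k, #(extensions B) ≤ k ^ 3 := by
    intro B hB
    refine card_image_le.trans_eq ?_
    rw [card_product, card_product, (mem_powersetCard.1 hB).2]
    ring
  calc #H ≤ #((univ.powersetCard k).biUnion extensions) := card_le_card hsub
    _ ≤ #(univ.powersetCard k) * k ^ 3 := card_biUnion_le_card_mul _ _ _ hextensions
    _ = (Fintype.card G).choose k * k ^ 3 := by rw [card_powersetCard, card_univ]

variable (G) in
lemma exists_frFree_two_three_choose_le [DecidableEq G] (k : ℕ) :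
    ∃ H : Finset (Finset G), (∀ A ∈ H, #A = k + 1) ∧ FrFree H (k + 2) 2 ∧ FrFree H (k + 3) 3 ∧
      (Fintype.card G).choose (k + 1) ≤
        (Fintype.card G).choose k * k ^ 3 + Fintype.card G * #H := by
  classical
  let edges : Finset (Finset G) := univ.powersetCard (k + 1)
  have hedges : ∀ A ∈ edges, #A = k + 1 := fun A hA ↦ (mem_powersetCard.1 hA).2
  have hnonSidon : #{A ∈ edges | ¬ IsWeakSidon A} ≤ (Fintype.card G).choose k * k ^ 3 :=
    card_le_of_forall_not_isWeakSidon (fun A hA ↦ hedges A (mem_filter.1 hA).1)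
      fun A hA ↦ (mem_filter.1 hA).2
  obtain ⟨s, hs⟩ := exists_card_le_card_mul_card_fiber {A ∈ edges | IsWeakSidon A}
    fun A ↦ ∑ x ∈ A, x
  set H := {A ∈ {A ∈ edges | IsWeakSidon A} | ∑ x ∈ A, x = s} with hH
  have hmem : ∀ A ∈ H, (A ∈ edges ∧ IsWeakSidon A) ∧ ∑ x ∈ A, x = s := fun A hA ↦ by
    simpa only [hH, mem_filter] using hA
  have hcard : ∀ A ∈ H, #A = k + 1 := fun A hA ↦ hedges A (hmem A hA).1.1
  have hsum : ∀ A ∈ H, ∑ x ∈ A, x = s := fun A hA ↦ (hmem A hA).2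
  refine ⟨H, hcard, frFree_two_of_sum_eq hcard hsum,
    frFree_three_of_isWeakSidon_of_sum_eq hcard hsum fun A hA ↦ (hmem A hA).1.2, ?_⟩
  calc (Fintype.card G).choose (k + 1) = #edges := by rw [card_powersetCard, card_univ]
    _ = #{A ∈ edges | ¬ IsWeakSidon A} + #{A ∈ edges | IsWeakSidon A} := by
      rw [add_comm, card_filter_add_card_filter_not]
    _ ≤ (Fintype.card G).choose k * k ^ 3 + Fintype.card G * #H := add_le_add hnonSidon hs

end Counting

lemma one_div_sub_mul_choose_le_of_choose_succ_le {n k m : ℕ} {ε : ℝ}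
    (hε : ((k + 1 : ℕ) : ℝ) ^ 3 ≤ ε * n)
    (hm : n.choose (k + 1) ≤ n.choose k * k ^ 3 + n * m) :
    (1 / (k + 1 : ℕ) - ε) * n.choose k ≤ m := by
  have hn : (0 : ℝ) < n :=
    n.cast_nonneg.lt_of_ne' (right_ne_zero_of_mul (lt_of_lt_of_le (by positivity) hε).ne')
  have hchoose : (n.choose k : ℝ) * n ≤
      (k + 1) * (n.choose k * k ^ 3 + n * m) + k * n.choose k := by
    exact_mod_cast (choose_mul_le_succ_mul_choose_succ_add n k).trans (by gcongr)
  have herror : (k + 1) * (k : ℝ) ^ 3 + k ≤ (k + 1) * (ε * n) := by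
    have hpoly : (k + 1) * (k : ℝ) ^ 3 + k ≤ (k + 1) * ((k + 1 : ℕ) : ℝ) ^ 3 := by
      exact_mod_cast (by ring_nf; lia : (k + 1) * k ^ 3 + k ≤ (k + 1) * (k + 1) ^ 3)
    exact hpoly.trans (by gcongr)
  refine le_of_mul_le_mul_left ?_ (by positivity : (0 : ℝ) < (k + 1) * n)
  calc (k + 1) * n * ((1 / (k + 1 : ℕ) - ε) * n.choose k)
      = n.choose k * n - (k + 1) * (ε * n) * n.choose k := by push_cast; field_simp
    _ ≤ n.choose k * n - ((k + 1) * (k : ℝ) ^ 3 + k) * n.choose k := by gcongr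
    _ ≤ (k + 1) * n * m := by linarith

/-- Freeness from two edges on `r + 1` vertices makes the bound asymptotically optimal: distinct
edges then share no `(r - 1)`-set, so there are at most `C(n, r - 1) / r` of them. -/
theorem stmt_19_general {r n : ℕ} (hr : r ≠ 0) {ε : ℝ} (hε : (r : ℝ) ^ 3 ≤ ε * n) :
    ∃ H : Finset (Finset (Fin n)),
      (∀ A ∈ H, #A = r) ∧ FrFree H (r + 1) 2 ∧ FrFree H (r + 2) 3 ∧
      ((1 / r : ℝ) - ε) * n.choose (r - 1) ≤ #H := by
  obtain ⟨k, rfl⟩ := Nat.exists_eq_succ_of_ne_zero hr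
  have : NeZero n :=
    ⟨Nat.cast_ne_zero.1 (right_ne_zero_of_mul (lt_of_lt_of_le (by positivity) hε).ne')⟩
  obtain ⟨H, hcard, htwo, hthree, hchoose⟩ := exists_frFree_two_three_choose_le (Fin n) k
  rw [Fintype.card_fin] at hchoose
  exact ⟨H, hcard, htwo, hthree, one_div_sub_mul_choose_le_of_choose_succ_le hε hchoose⟩

/-- For every integer `r ≥ 3` and every real `ε > 0` there exists `N` such that for
every integer `n ≥ N` there exists an `F_r(r+2,3)`-free `r`-graph on `n` vertices with
at least `(1/r − ε)·C(n,r−1)` edges; that is,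
`f_r(n, r+2, 3) ≥ (1/r − o(1))·C(n,r−1)` as `n → ∞`. -/
theorem stmt_19 (r : ℕ) (hr : 3 ≤ r) (ε : ℝ) (hε : 0 < ε) :
    ∃ N : ℕ, ∀ n : ℕ, N ≤ n →
      ∃ H : Finset (Finset (Fin n)),
        (∀ A ∈ H, A.card = r) ∧
        FrFree H (r + 2) 3 ∧
        ((1 / r : ℝ) - ε) * (n.choose (r - 1)) ≤ H.card := by
  refine ⟨⌈(r : ℝ) ^ 3 / ε⌉₊, fun n hn ↦ ?_⟩
  obtain ⟨H, hcard, -, hthree, hH⟩ :=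
    stmt_19_general (by lia : r ≠ 0) ((div_le_iff₀' hε).1 (Nat.ceil_le.1 hn))
  exact ⟨H, hcard, hthree, hH⟩
end
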